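/- Let X be a locally compact Polish space with compatible metric d, and let G be a group of homeomorphisms of X such that: (i) the family {φ : φ ∈ G} is equicontinuous on every compact subset of X; (ii) for every t ∈ X the orbit {φ(t) : φ ∈ G} is nowhere dense in X; (iii) G is relatively SOT-closed, meaning that whenever a sequence of composition operators C_{φₙ} with φₙ ∈ G converges in the strong operator topology to a surjective lattice isometry T of (C₀(X), ‖·‖_∞), then T = C_φ for some φ ∈ G. Then for every C > 1 there exists a norm N on C₀(X) such that: N is a lattice norm (|x| ≤ |y| implies N(x) ≤ N(y)); ‖x‖_∞ ≤ N(x) ≤ C‖x‖_∞ for all x ∈ C₀(X); every composition operator C_φ with φ ∈ G satisfies N(C_φ x) = N(x) for all x; and conversely every lattice isomorphism T of C₀(X) satisfying N(T x) = N(x) for all x equals C_φ for some φ ∈ G. -/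

import Mathlib

open ZeroAtInfty Filter Topology Metric

noncomputable section

/-- Pointwise supremum of two continuous functions vanishing at infinity. -/
def c0sup {X : Type*} [TopologicalSpace X] (f g : C₀(X, ℝ)) : C₀(X, ℝ) where
  toFun := fun t => max (f t) (g t)
  continuous_toFun := (map_continuous f).max (map_continuous g)
  zero_at_infty' := by simpa using (zero_at_infty f).max (zero_at_infty g)

/-- Composition operator `f ↦ f ∘ φ` on `C₀(X)` induced by a homeomorphism `φ`. -/
def compOp {X : Type*} [TopologicalSpace X] (φ : X ≃ₜ X) (f : C₀(X, ℝ)) : C₀(X, ℝ) where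
  toFun := fun t => f (φ t)
  continuous_toFun := (map_continuous f).comp φ.continuous
  zero_at_infty' := (zero_at_infty f).comp φ.map_cocompact.le

/-!
Fix an injective dense sequence `t` whose first point has a nowhere dense orbit, and rapidly
decreasing weights `a` with `a 0 = 1`. The norm of `x` is the larger of `‖x‖` and the supremum over
`g ∈ G` of `∑' k, a k * |x (g (t k))|`.

A lattice isomorphism has the form `T f s = w s * f (ψ s)` with `ψ` a homeomorphism. A bump function
vanishing on the orbit of `t 0` has norm at most `1`, since it never meets the leading weight; hence
an isometry has `w = 1` on a dense set, and `T = compOp ψ`.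

Testing the isometry on a function with heights `1, 1/2, 1/4, …` near `ψ (t 0), ψ (t 1), …` yields
some `g ∈ G` with a near-maximal weighted sum. The weights decrease so fast that such a sum
determines which `g (t i)` lies near which `ψ (t j)`, so `g (t i)` is close to `ψ (t i)` for many
`i`. Thus `ψ` is a pointwise limit of elements of `G` on a dense set, equicontinuity upgrades this
to strong operator convergence of the composition operators, and the closedness of `G` applies.
-/

section ZeroAtInfty

variable {X : Type*} [TopologicalSpace X]

@[simp] lemma c0sup_apply (f g : C₀(X, ℝ)) (s : X) : c0sup f g s = max (f s) (g s) := rfl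

@[simp] lemma compOp_apply (φ : X ≃ₜ X) (f : C₀(X, ℝ)) (s : X) : compOp φ f s = f (φ s) := rfl

lemma abs_apply_le_norm (f : C₀(X, ℝ)) (s : X) : |f s| ≤ ‖f‖ :=
  f.toBCF.norm_coe_le_norm s

lemma norm_le_of_forall_abs_le {f : C₀(X, ℝ)} {M : ℝ} (hM : 0 ≤ M) (h : ∀ s, |f s| ≤ M) :
    ‖f‖ ≤ M :=
  (BoundedContinuousFunction.norm_le (f := f.toBCF) hM).2 h

lemma norm_le_norm_of_abs_le {f g : C₀(X, ℝ)} (h : ∀ s, |f s| ≤ |g s|) : ‖f‖ ≤ ‖g‖ :=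
  norm_le_of_forall_abs_le (norm_nonneg g) fun s => (h s).trans (abs_apply_le_norm g s)

lemma compOp_symm_compOp (φ : X ≃ₜ X) (f : C₀(X, ℝ)) : compOp φ.symm (compOp φ f) = f := by
  ext s
  simp

lemma norm_compOp_le (φ : X ≃ₜ X) (f : C₀(X, ℝ)) : ‖compOp φ f‖ ≤ ‖f‖ :=
  norm_le_of_forall_abs_le (norm_nonneg f) fun s => abs_apply_le_norm f (φ s)

lemma norm_compOp (φ : X ≃ₜ X) (f : C₀(X, ℝ)) : ‖compOp φ f‖ = ‖f‖ :=
  (norm_compOp_le φ f).antisymm <| by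
    simpa only [compOp_symm_compOp] using norm_compOp_le φ.symm (compOp φ f)

lemma exists_bump [LocallyCompactSpace X] [T2Space X] {p : X} {V : Set X} (hV : V ∈ 𝓝 p) :
    ∃ b : C₀(X, ℝ), b p = 1 ∧ (∀ s ∉ V, b s = 0) ∧ ∀ s, b s ∈ Set.Icc 0 1 := by
  obtain ⟨b, hb_one, hb_zero, hb_supp, hb_mem⟩ :=
    exists_continuous_one_zero_of_isCompact (s := {p}) (t := (interior V)ᶜ) isCompact_singleton
      isOpen_interior.isClosed_compl (by simpa using mem_interior_iff_mem_nhds.2 hV)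
  exact ⟨⟨b, hb_supp.is_zero_at_infty⟩, hb_one rfl,
    fun s hs => hb_zero fun hs' => hs (interior_subset hs'), hb_mem⟩

/-- Evaluation at a point, as a continuous linear functional on `C₀(X)`. -/
def evalCLM (s : X) : C₀(X, ℝ) →L[ℝ] ℝ :=
  LinearMap.mkContinuous
    { toFun := fun f => f s
      map_add' := fun _ _ => rfl
      map_smul' := fun _ _ => rfl } 1 fun f => by
    rw [one_mul]
    exact abs_apply_le_norm f s

@[simp] lemma evalCLM_apply (s : X) (f : C₀(X, ℝ)) : evalCLM s f = f s := rfl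

end ZeroAtInfty

section LatticeFunctional

variable {X : Type*} [TopologicalSpace X] {L : C₀(X, ℝ) →L[ℝ] ℝ}

lemma map_nonneg_of_map_c0sup (hL : ∀ f g, L (c0sup f g) = max (L f) (L g)) {f : C₀(X, ℝ)}
    (hf : ∀ s, 0 ≤ f s) : 0 ≤ L f := by
  have hsup : c0sup f 0 = f := by
    ext s
    simp [hf s]
  rw [← hsup, hL, map_zero]
  exact le_max_right _ _

lemma exists_map_eq_zero_lt_apply (hL : ∀ f g, L (c0sup f g) = max (L f) (L g)) {s : X}
    (h : ∃ g, L g = 0 ∧ g s ≠ 0) (M : ℝ) :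
    ∃ F : C₀(X, ℝ), L F = 0 ∧ (∀ u, 0 ≤ F u) ∧ M < F s := by
  obtain ⟨g, hLg, hgs⟩ := h
  have hpos : 0 < |g s| := abs_pos.2 hgs
  have habs : ∀ u, c0sup g (-g) u = |g u| := fun u => rfl
  refine ⟨((|M| + 1) / |g s|) • c0sup g (-g), ?_, fun u => ?_, ?_⟩
  · rw [map_smul, hL, map_neg, hLg, neg_zero, max_self, smul_zero]
  · rw [ZeroAtInftyContinuousMap.smul_apply, habs, smul_eq_mul]
    positivity
  · rw [ZeroAtInftyContinuousMap.smul_apply, habs, smul_eq_mul, div_mul_cancel₀ _ hpos.ne']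
    exact (le_abs_self M).trans_lt (lt_add_one _)

lemma exists_map_eq_zero_le_add (hL : ∀ f g, L (c0sup f g) = max (L f) (L g))
    (h : ∀ s, ∃ g, L g = 0 ∧ g s ≠ 0) (f : C₀(X, ℝ)) {ε : ℝ} (hε : 0 < ε) :
    ∃ F : C₀(X, ℝ), L F = 0 ∧ ∀ s, f s ≤ F s + ε := by
  have h_infty : ∀ᶠ s in cocompact X, f s < ε :=
    (zero_at_infty f).eventually (gt_mem_nhds hε)
  obtain ⟨K, hK, hfK⟩ := mem_cocompact.1 h_infty
  obtain ⟨F, hLF, hF, hfF⟩ :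
      ∃ F : C₀(X, ℝ), L F = 0 ∧ (∀ s, 0 ≤ F s) ∧ ∀ s ∈ K, f s ≤ F s := by
    refine hK.induction_on (p := fun K => ∃ F, L F = 0 ∧ (∀ s, 0 ≤ F s) ∧ ∀ s ∈ K, f s ≤ F s)
      ⟨0, map_zero L, fun _ => le_rfl, by simp⟩ ?_ ?_ ?_
    · rintro K K' hKK' ⟨F, hLF, hF, hfF⟩
      exact ⟨F, hLF, hF, fun s hs => hfF s (hKK' hs)⟩
    · rintro K K' ⟨F, hLF, hF, hfF⟩ ⟨F', hLF', hF', hfF'⟩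
      refine ⟨F + F', by rw [map_add, hLF, hLF', add_zero], fun s => add_nonneg (hF s) (hF' s), ?_⟩
      rintro s (hs | hs)
      · exact (hfF s hs).trans (le_add_of_nonneg_right (hF' s))
      · exact (hfF' s hs).trans (le_add_of_nonneg_left (hF s))
    · intro s _
      obtain ⟨F, hLF, hF, hfF⟩ := exists_map_eq_zero_lt_apply hL (h s) (f s)
      have h_open : IsOpen {u | f u < F u} := isOpen_lt (map_continuous f) (map_continuous F)
      exact ⟨_, mem_nhdsWithin_of_mem_nhds (h_open.mem_nhds hfF), F, hLF, hF, fun u hu => hu.le⟩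
  refine ⟨F, hLF, fun s => ?_⟩
  by_cases hs : s ∈ K
  · linarith [hfF s hs]
  · have hfs : f s < ε := hfK hs
    linarith [hF s]

lemma exists_forall_map_eq_zero_imp (hL : ∀ f g, L (c0sup f g) = max (L f) (L g)) (hne : L ≠ 0) :
    ∃ s, ∀ f, L f = 0 → f s = 0 := by
  by_contra! h
  -- Every `f` lies below the kernel of `L` up to an arbitrarily small constant.
  have h_nonpos : ∀ f, L f ≤ 0 := fun f => by
    refine le_of_forall_pos_le_add fun η hη => ?_
    obtain ⟨F, hLF, hfF⟩ :=
      exists_map_eq_zero_le_add hL h f (ε := η / (‖L‖ + 1)) (by positivity)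
    have h_norm : ‖c0sup (f - F) 0‖ ≤ η / (‖L‖ + 1) :=
      norm_le_of_forall_abs_le (by positivity) fun s => by
        rw [c0sup_apply, ZeroAtInftyContinuousMap.zero_apply, abs_of_nonneg (le_max_right _ _)]
        refine max_le ?_ (by positivity)
        rw [ZeroAtInftyContinuousMap.sub_apply]
        linarith [hfF s]
    calc L f ≤ max (L (f - F)) (L 0) := by
          rw [map_sub, hLF, sub_zero]
          exact le_max_left _ _
      _ = L (c0sup (f - F) 0) := (hL _ _).symm
      _ ≤ ‖L‖ * ‖c0sup (f - F) 0‖ := (le_abs_self _).trans (L.le_opNorm _)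
      _ ≤ (‖L‖ + 1) * (η / (‖L‖ + 1)) := by gcongr; linarith
      _ = 0 + η := by field_simp; ring
  refine hne (ContinuousLinearMap.ext fun f => (h_nonpos f).antisymm ?_)
  simpa using h_nonpos (-f)

theorem exists_eq_mul_apply_of_map_c0sup [LocallyCompactSpace X] [T2Space X]
    (hL : ∀ f g, L (c0sup f g) = max (L f) (L g)) (hne : L ≠ 0) :
    ∃ c : ℝ, 0 < c ∧ ∃ s, ∀ f, L f = c * f s := by
  obtain ⟨s, hs⟩ := exists_forall_map_eq_zero_imp hL hne
  obtain ⟨b, hbs, -, hb⟩ := exists_bump (univ_mem : Set.univ ∈ 𝓝 s)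
  have hLb : L b ≠ 0 := fun h => one_ne_zero (hbs ▸ hs b h)
  refine ⟨L b, (map_nonneg_of_map_c0sup hL fun u => (hb u).1).lt_of_ne' hLb, s, fun f => ?_⟩
  have h_sub : f s - L f / L b * b s = 0 :=
    hs (f - (L f / L b) • b) (by simp [hLb])
  rw [hbs, mul_one, sub_eq_zero] at h_sub
  rw [h_sub, mul_div_cancel₀ _ hLb]

end LatticeFunctional

section LatticeIsomorphism

variable {X : Type*} [TopologicalSpace X]

lemma map_c0sup_symm {T : C₀(X, ℝ) ≃L[ℝ] C₀(X, ℝ)}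
    (hT : ∀ f g, T (c0sup f g) = c0sup (T f) (T g)) (f g : C₀(X, ℝ)) :
    T.symm (c0sup f g) = c0sup (T.symm f) (T.symm g) :=
  T.injective (by simp [hT])

variable [LocallyCompactSpace X] [T2Space X]

lemma exists_apply_eq_mul_apply {T : C₀(X, ℝ) ≃L[ℝ] C₀(X, ℝ)}
    (hT : ∀ f g, T (c0sup f g) = c0sup (T f) (T g)) (s : X) :
    ∃ c : ℝ, 0 < c ∧ ∃ p, ∀ f, T f s = c * f p := by
  refine exists_eq_mul_apply_of_map_c0sup (L := (evalCLM s).comp T.toContinuousLinearMap)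
    (fun f g => by simp [hT]) fun h_zero => ?_
  obtain ⟨b, hbs, -⟩ := exists_bump (univ_mem : Set.univ ∈ 𝓝 s)
  simpa [hbs] using DFunLike.congr_fun h_zero (T.symm b)

lemma eq_of_forall_apply_eq_mul {p q : X} {c : ℝ} (h : ∀ f : C₀(X, ℝ), f p = c * f q) :
    p = q := by
  by_contra hpq
  obtain ⟨b, hbp, hb, -⟩ := exists_bump (isOpen_compl_singleton.mem_nhds hpq)
  simpa [hbp, hb q] using h b

lemma continuous_of_forall_apply_eq_mul {T : C₀(X, ℝ) → C₀(X, ℝ)} {w : X → ℝ}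
    (hw : ∀ s, 0 < w s) {ψ : X → X} (h : ∀ s f, T f s = w s * f (ψ s)) : Continuous ψ := by
  refine continuous_iff_continuousAt.2 fun s V hV => ?_
  obtain ⟨b, hbs, hb, -⟩ := exists_bump hV
  have hTb : 0 < T b s := by simpa [h, hbs] using hw s
  rw [mem_map]
  filter_upwards [(map_continuous (T b)).continuousAt.eventually (lt_mem_nhds hTb)] with u hu
  by_contra hψu
  rw [h, hb _ hψu, mul_zero] at hu
  exact hu.false

theorem exists_homeomorph_apply_eq_mul {T : C₀(X, ℝ) ≃L[ℝ] C₀(X, ℝ)}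
    (hT : ∀ f g, T (c0sup f g) = c0sup (T f) (T g)) :
    ∃ (ψ : X ≃ₜ X) (w : X → ℝ), (∀ s, 0 < w s) ∧ ∀ s f, T f s = w s * f (ψ s) := by
  choose w hw ψ hψ using exists_apply_eq_mul_apply hT
  choose w' hw' ψ' hψ' using exists_apply_eq_mul_apply (map_c0sup_symm hT)
  have h_left : ∀ s, ψ' (ψ s) = s := fun s => by
    refine (eq_of_forall_apply_eq_mul (c := w s * w' (ψ s)) fun f => ?_).symm
    rw [mul_assoc, ← hψ', ← hψ, T.apply_symm_apply]
  have h_right : ∀ s, ψ (ψ' s) = s := fun s => by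
    refine (eq_of_forall_apply_eq_mul (c := w' s * w (ψ' s)) fun f => ?_).symm
    rw [mul_assoc, ← hψ, ← hψ', T.symm_apply_apply]
  exact ⟨⟨⟨ψ, ψ', h_left, h_right⟩, continuous_of_forall_apply_eq_mul hw hψ,
    continuous_of_forall_apply_eq_mul hw' hψ'⟩, w, hw, hψ⟩

end LatticeIsomorphism

section Weights

lemma le_mul_half_pow_of_succ_le {a : ℕ → ℝ} (h : ∀ k, a (k + 1) ≤ 1 / 2 * a k) (k : ℕ) :
    a k ≤ a 0 * (1 / 2) ^ k :=
  (le_geom (by norm_num) k fun j _ => h j).trans_eq (mul_comm _ _)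

lemma summable_of_succ_le_half {a : ℕ → ℝ} (ha : ∀ k, 0 ≤ a k)
    (h : ∀ k, a (k + 1) ≤ 1 / 2 * a k) : Summable a :=
  .of_nonneg_of_le ha (le_mul_half_pow_of_succ_le h) (summable_geometric_two.mul_left _)

lemma tsum_le_two_mul_of_succ_le_half {a : ℕ → ℝ} (ha : ∀ k, 0 ≤ a k)
    (h : ∀ k, a (k + 1) ≤ 1 / 2 * a k) : ∑' k, a k ≤ 2 * a 0 :=
  calc ∑' k, a k ≤ ∑' k, a 0 * (1 / 2) ^ k :=
        (summable_of_succ_le_half ha h).tsum_le_tsum (le_mul_half_pow_of_succ_le h)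
          (summable_geometric_two.mul_left _)
    _ = 2 * a 0 := by rw [tsum_mul_left, tsum_geometric_two, mul_comm]

lemma pow_succ_sq_le {r : ℝ} (hr : 0 ≤ r) (hr' : r ≤ 1 / 8) (k : ℕ) :
    r ^ (k + 1) ^ 2 ≤ r * (r ^ k ^ 2 * (1 / 2) ^ k) :=
  calc r ^ (k + 1) ^ 2 = r * (r ^ k ^ 2 * (r ^ 2) ^ k) := by ring
    _ ≤ r * (r ^ k ^ 2 * (1 / 2) ^ k) := by
      gcongr
      nlinarith

lemma pow_succ_sq_le_half_mul {r : ℝ} (hr : 0 ≤ r) (hr' : r ≤ 1 / 8) (k : ℕ) :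
    r ^ (k + 1) ^ 2 ≤ 1 / 2 * r ^ k ^ 2 :=
  calc r ^ (k + 1) ^ 2 ≤ r * (r ^ k ^ 2 * (1 / 2) ^ k) := pow_succ_sq_le hr hr' k
    _ ≤ 1 / 2 * (r ^ k ^ 2 * 1) := by
      gcongr
      · linarith
      · exact pow_le_one₀ (by norm_num) (by norm_num)
    _ = 1 / 2 * r ^ k ^ 2 := by rw [mul_one]

lemma summable_pow_sq {r : ℝ} (hr : 0 ≤ r) (hr' : r ≤ 1 / 8) :
    Summable fun k : ℕ => r ^ k ^ 2 :=
  summable_of_succ_le_half (fun _ => by positivity) (pow_succ_sq_le_half_mul hr hr')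

lemma tsum_pow_sq_tail_le {r : ℝ} (hr : 0 ≤ r) (hr' : r ≤ 1 / 8) (n : ℕ) :
    ∑' k, r ^ (k + (n + 1)) ^ 2 ≤ 2 * r * (r ^ n ^ 2 * (1 / 2) ^ n) := by
  have h_tail : ∑' k, r ^ (k + (n + 1)) ^ 2 ≤ 2 * r ^ (0 + (n + 1)) ^ 2 :=
    tsum_le_two_mul_of_succ_le_half (fun _ => by positivity) fun k => by
      simpa only [Nat.add_right_comm] using pow_succ_sq_le_half_mul hr hr' (k + (n + 1))
  rw [zero_add] at h_tail
  linarith [pow_succ_sq_le hr hr' n]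

/-- Positive summable weights, normalized by `a 0 = 1`, so rapidly decreasing that the total
weight beyond `n` is at most a quarter of `a n * (1 / 2) ^ n`. -/
structure IsRapidlyDecreasing (a : ℕ → ℝ) : Prop where
  zero : a 0 = 1
  pos : ∀ k, 0 < a k
  summable : Summable a
  tail_le : ∀ n, ∑' k, a (k + (n + 1)) ≤ a n * (1 / 2) ^ n / 4

lemma isRapidlyDecreasing_pow_sq {r : ℝ} (hr : 0 < r) (hr' : r ≤ 1 / 8) :
    IsRapidlyDecreasing fun k => r ^ k ^ 2 where
  zero := by simp
  pos k := by positivity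
  summable := summable_pow_sq hr.le hr'
  tail_le n :=
    calc ∑' k, r ^ (k + (n + 1)) ^ 2 ≤ 2 * r * (r ^ n ^ 2 * (1 / 2) ^ n) :=
          tsum_pow_sq_tail_le hr.le hr' n
      _ ≤ 2 * (1 / 8) * (r ^ n ^ 2 * (1 / 2) ^ n) := by gcongr
      _ = r ^ n ^ 2 * (1 / 2) ^ n / 4 := by ring

lemma exists_isRapidlyDecreasing {C : ℝ} (hC : 1 < C) :
    ∃ a, IsRapidlyDecreasing a ∧ ∑' k, a k ≤ C := by
  obtain ⟨r, hr, hr', hrC⟩ : ∃ r : ℝ, 0 < r ∧ r ≤ 1 / 8 ∧ r ≤ (C - 1) / 2 :=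
    ⟨min (1 / 8) ((C - 1) / 2), lt_min (by norm_num) (by linarith), min_le_left _ _,
      min_le_right _ _⟩
  refine ⟨_, isRapidlyDecreasing_pow_sq hr hr', ?_⟩
  have h_tail : ∑' k, r ^ (k + 1) ^ 2 ≤ 2 * r := by simpa using tsum_pow_sq_tail_le hr.le hr' 0
  rw [(summable_pow_sq hr.le hr').tsum_eq_zero_add]
  simp only [ne_eq, OfNat.ofNat_ne_zero, not_false_eq_true, zero_pow, pow_zero]
  linarith

/-- A bound for `∑' k, a k * u k` when `u` falls short of the values `(1 / 2) ^ k` for the first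
time at the index `n`. -/
def threshold (a : ℕ → ℝ) (n : ℕ) : ℝ :=
  ∑ k ∈ Finset.range n, a k * (1 / 2) ^ k + 3 / 4 * (a n * (1 / 2) ^ n)

variable {a : ℕ → ℝ}

lemma threshold_monotone (ha : ∀ k, 0 ≤ a k) : Monotone (threshold a) := by
  refine monotone_nat_of_le_succ fun n => ?_
  have h_n : 0 ≤ a n * (1 / 2) ^ n := mul_nonneg (ha n) (by positivity)
  have h_succ : 0 ≤ a (n + 1) * (1 / 2) ^ (n + 1) := mul_nonneg (ha _) (by positivity)
  rw [threshold, threshold, Finset.sum_range_succ]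
  linarith

lemma threshold_lt_sum (ha : ∀ k, 0 < a k) (n : ℕ) :
    threshold a n < ∑ k ∈ Finset.range (n + 1), a k * (1 / 2) ^ k := by
  have h_n : 0 < a n * (1 / 2) ^ n := mul_pos (ha n) (by positivity)
  rw [threshold, Finset.sum_range_succ]
  linarith

lemma IsRapidlyDecreasing.one_lt_threshold (ha : IsRapidlyDecreasing a) {n : ℕ} (hn : 1 ≤ n) :
    1 < threshold a n :=
  calc 1 < threshold a 1 := by simp [threshold, ha.zero, ha.pos 1]
    _ ≤ threshold a n := threshold_monotone (fun k => (ha.pos k).le) hn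

lemma IsRapidlyDecreasing.tsum_mul_tail_le (ha : IsRapidlyDecreasing a) {u : ℕ → ℝ}
    (hu : ∀ k, u k ∈ Set.Icc 0 1) (n : ℕ) :
    ∑' k, a (k + (n + 1)) * u (k + (n + 1)) ≤ a n * (1 / 2) ^ n / 4 := by
  have h_le : ∀ k, a (k + (n + 1)) * u (k + (n + 1)) ≤ a (k + (n + 1)) := fun k =>
    mul_le_of_le_one_right (ha.pos _).le (hu _).2
  have h_tail : Summable fun k => a (k + (n + 1)) := (summable_nat_add_iff (n + 1)).2 ha.summable
  refine le_trans (Summable.tsum_le_tsum h_le ?_ h_tail) (ha.tail_le n)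
  exact .of_nonneg_of_le (fun k => mul_nonneg (ha.pos _).le (hu _).1) h_le h_tail

lemma IsRapidlyDecreasing.tsum_mul_le_threshold (ha : IsRapidlyDecreasing a) {u : ℕ → ℝ}
    (hu : ∀ k, u k ∈ Set.Icc 0 1) {n : ℕ} (h_lt : ∀ k < n, u k ≤ (1 / 2) ^ k)
    (h_n : u n ≤ (1 / 2) ^ (n + 1)) : ∑' k, a k * u k ≤ threshold a n := by
  have h_summable : Summable fun k => a k * u k :=
    .of_nonneg_of_le (fun k => mul_nonneg (ha.pos k).le (hu k).1)
      (fun k => mul_le_of_le_one_right (ha.pos k).le (hu k).2) ha.summable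
  have h_head : ∑ k ∈ Finset.range n, a k * u k ≤ ∑ k ∈ Finset.range n, a k * (1 / 2) ^ k :=
    Finset.sum_le_sum fun k hk =>
      mul_le_mul_of_nonneg_left (h_lt k (Finset.mem_range.1 hk)) (ha.pos k).le
  have h_mid : a n * u n ≤ a n * (1 / 2) ^ (n + 1) := mul_le_mul_of_nonneg_left h_n (ha.pos n).le
  rw [← h_summable.sum_add_tsum_nat_add (n + 1), Finset.sum_range_succ, threshold]
  rw [pow_succ] at h_mid
  linarith [ha.tsum_mul_tail_le hu n]

end Weights

section GroupNorm

variable {X : Type*} [TopologicalSpace X] {G : Set (X ≃ₜ X)} {a : ℕ → ℝ}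

/-- The `ℓ¹`-type lattice seminorm attached to weights `a` and a sequence of points `t`. -/
def weightedSum (a : ℕ → ℝ) (t : ℕ → X) (x : C₀(X, ℝ)) : ℝ :=
  ∑' k, a k * |x (t k)|

lemma summable_mul_abs_apply (ha : ∀ k, 0 ≤ a k) (hs : Summable a) (t : ℕ → X) (x : C₀(X, ℝ)) :
    Summable fun k => a k * |x (t k)| :=
  .of_nonneg_of_le (fun k => mul_nonneg (ha k) (abs_nonneg _))
    (fun k => mul_le_mul_of_nonneg_left (abs_apply_le_norm x (t k)) (ha k)) (hs.mul_right ‖x‖)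

lemma weightedSum_le_mul_norm (ha : ∀ k, 0 ≤ a k) (hs : Summable a) (t : ℕ → X) (x : C₀(X, ℝ)) :
    weightedSum a t x ≤ (∑' k, a k) * ‖x‖ := by
  rw [weightedSum, ← tsum_mul_right]
  exact (summable_mul_abs_apply ha hs t x).tsum_le_tsum
    (fun k => mul_le_mul_of_nonneg_left (abs_apply_le_norm x (t k)) (ha k)) (hs.mul_right ‖x‖)

lemma weightedSum_mono (ha : ∀ k, 0 ≤ a k) (hs : Summable a) (t : ℕ → X) {x y : C₀(X, ℝ)}
    (h : ∀ s, |x s| ≤ |y s|) : weightedSum a t x ≤ weightedSum a t y :=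
  (summable_mul_abs_apply ha hs t x).tsum_le_tsum
    (fun k => mul_le_mul_of_nonneg_left (h (t k)) (ha k)) (summable_mul_abs_apply ha hs t y)

lemma weightedSum_add_le (ha : ∀ k, 0 ≤ a k) (hs : Summable a) (t : ℕ → X) (x y : C₀(X, ℝ)) :
    weightedSum a t (x + y) ≤ weightedSum a t x + weightedSum a t y := by
  have hx := summable_mul_abs_apply ha hs t x
  have hy := summable_mul_abs_apply ha hs t y
  rw [weightedSum, weightedSum, weightedSum, ← hx.tsum_add hy]
  refine (summable_mul_abs_apply ha hs t (x + y)).tsum_le_tsum (fun k => ?_) (hx.add hy)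
  rw [← mul_add]
  exact mul_le_mul_of_nonneg_left (abs_add_le _ _) (ha k)

lemma weightedSum_smul (t : ℕ → X) (c : ℝ) (x : C₀(X, ℝ)) :
    weightedSum a t (c • x) = |c| * weightedSum a t x := by
  simp only [weightedSum, ← tsum_mul_left, ZeroAtInftyContinuousMap.smul_apply, smul_eq_mul,
    abs_mul, mul_left_comm]

/-- The renorming of `C₀(X)`: the larger of the supremum norm and all the seminorms
`weightedSum a (g ∘ t)` with `g ∈ G`. -/
def groupNorm (G : Set (X ≃ₜ X)) (a : ℕ → ℝ) (t : ℕ → X) (x : C₀(X, ℝ)) : ℝ :=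
  max ‖x‖ (⨆ g : G, weightedSum a (g.1 ∘ t) x)

variable {t : ℕ → X}

lemma norm_le_groupNorm (x : C₀(X, ℝ)) : ‖x‖ ≤ groupNorm G a t x := le_max_left _ _

lemma weightedSum_le_groupNorm (ha : ∀ k, 0 ≤ a k) (hs : Summable a) {g : X ≃ₜ X} (hg : g ∈ G)
    (x : C₀(X, ℝ)) : weightedSum a (g ∘ t) x ≤ groupNorm G a t x :=
  le_max_of_le_right <| le_ciSup (f := fun g : G => weightedSum a (g.1 ∘ t) x)
    ⟨(∑' k, a k) * ‖x‖, Set.forall_mem_range.2 fun _ => weightedSum_le_mul_norm ha hs _ x⟩ ⟨g, hg⟩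

lemma groupNorm_le (hG : G.Nonempty) {x : C₀(X, ℝ)} {M : ℝ} (h_norm : ‖x‖ ≤ M)
    (h_sum : ∀ g ∈ G, weightedSum a (g ∘ t) x ≤ M) : groupNorm G a t x ≤ M :=
  have := hG.to_subtype
  max_le h_norm <| ciSup_le fun g => h_sum g.1 g.2

lemma groupNorm_le_mul_norm (hG : G.Nonempty) (ha : ∀ k, 0 ≤ a k) (hs : Summable a) {C : ℝ}
    (hC : 1 ≤ C) (haC : ∑' k, a k ≤ C) (x : C₀(X, ℝ)) : groupNorm G a t x ≤ C * ‖x‖ :=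
  groupNorm_le hG (le_mul_of_one_le_left (norm_nonneg x) hC) fun _ _ =>
    (weightedSum_le_mul_norm ha hs _ x).trans (mul_le_mul_of_nonneg_right haC (norm_nonneg x))

lemma groupNorm_mono (hG : G.Nonempty) (ha : ∀ k, 0 ≤ a k) (hs : Summable a) {x y : C₀(X, ℝ)}
    (h : ∀ s, |x s| ≤ |y s|) : groupNorm G a t x ≤ groupNorm G a t y :=
  groupNorm_le hG ((norm_le_norm_of_abs_le h).trans (norm_le_groupNorm y)) fun _ hg =>
    (weightedSum_mono ha hs _ h).trans (weightedSum_le_groupNorm ha hs hg y)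

lemma groupNorm_add_le (hG : G.Nonempty) (ha : ∀ k, 0 ≤ a k) (hs : Summable a)
    (x y : C₀(X, ℝ)) : groupNorm G a t (x + y) ≤ groupNorm G a t x + groupNorm G a t y :=
  groupNorm_le hG
    ((norm_add_le x y).trans (add_le_add (norm_le_groupNorm x) (norm_le_groupNorm y)))
    fun _ hg => (weightedSum_add_le ha hs _ x y).trans
      (add_le_add (weightedSum_le_groupNorm ha hs hg x) (weightedSum_le_groupNorm ha hs hg y))

lemma groupNorm_smul (c : ℝ) (x : C₀(X, ℝ)) :
    groupNorm G a t (c • x) = |c| * groupNorm G a t x := by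
  simp only [groupNorm, weightedSum_smul, norm_smul, Real.norm_eq_abs,
    ← Real.mul_iSup_of_nonneg (abs_nonneg c), mul_max_of_nonneg _ _ (abs_nonneg c)]

lemma groupNorm_compOp_le (ha : ∀ k, 0 ≤ a k) (hs : Summable a)
    (h_comp : ∀ φ ∈ G, ∀ ψ ∈ G, φ.trans ψ ∈ G) {φ : X ≃ₜ X} (hφ : φ ∈ G) (x : C₀(X, ℝ)) :
    groupNorm G a t (compOp φ x) ≤ groupNorm G a t x :=
  groupNorm_le ⟨φ, hφ⟩ ((norm_compOp_le φ x).trans (norm_le_groupNorm x)) fun g hg =>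
    weightedSum_le_groupNorm ha hs (h_comp g hg φ hφ) x

lemma groupNorm_compOp (ha : ∀ k, 0 ≤ a k) (hs : Summable a)
    (h_comp : ∀ φ ∈ G, ∀ ψ ∈ G, φ.trans ψ ∈ G) (h_inv : ∀ φ ∈ G, φ.symm ∈ G) {φ : X ≃ₜ X}
    (hφ : φ ∈ G) (x : C₀(X, ℝ)) : groupNorm G a t (compOp φ x) = groupNorm G a t x :=
  (groupNorm_compOp_le ha hs h_comp hφ x).antisymm <| by
    simpa only [compOp_symm_compOp] using
      groupNorm_compOp_le ha hs h_comp (h_inv φ hφ) (compOp φ x)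

lemma weightedSum_eq_add_tsum (ha : ∀ k, 0 ≤ a k) (hs : Summable a) (t : ℕ → X)
    (x : C₀(X, ℝ)) :
    weightedSum a t x = a 0 * |x (t 0)| + ∑' k, a (k + 1) * |x (t (k + 1))| :=
  (summable_mul_abs_apply ha hs t x).tsum_eq_zero_add

lemma groupNorm_le_one (hG : G.Nonempty) (ha : IsRapidlyDecreasing a) {b : C₀(X, ℝ)}
    (hb : ∀ s, b s ∈ Set.Icc 0 1) (h_zero : ∀ g ∈ G, b (g (t 0)) = 0) :
    groupNorm G a t b ≤ 1 := by
  have hb' : ∀ s, |b s| ∈ Set.Icc 0 1 := fun s => by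
    rw [abs_of_nonneg (hb s).1]
    exact hb s
  refine groupNorm_le hG (norm_le_of_forall_abs_le zero_le_one fun s => (hb' s).2) fun g hg => ?_
  calc weightedSum a (g ∘ t) b
      = a 0 * |b (g (t 0))| + ∑' k, a (k + 1) * |b (g (t (k + 1)))| :=
        weightedSum_eq_add_tsum (fun k => (ha.pos k).le) ha.summable _ _
    _ ≤ a 0 * |b (g (t 0))| + a 0 * (1 / 2) ^ 0 / 4 := by
        gcongr
        exact ha.tsum_mul_tail_le (fun k => hb' (g (t k))) 0
    _ ≤ 1 := by
        rw [h_zero g hg, ha.zero]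
        norm_num

end GroupNorm

section WeightOne

variable {X : Type*} [TopologicalSpace X] [LocallyCompactSpace X] [T2Space X]
  {G : Set (X ≃ₜ X)} {a : ℕ → ℝ} {t : ℕ → X}

lemma weight_le_one (hG : G.Nonempty) (ha : IsRapidlyDecreasing a) {T : C₀(X, ℝ) → C₀(X, ℝ)}
    (hN : ∀ x, groupNorm G a t (T x) = groupNorm G a t x) {s p : X} {c : ℝ}
    (hT : ∀ f, T f s = c * f p) (hp : p ∉ closure {z : X | ∃ φ ∈ G, φ (t 0) = z}) : c ≤ 1 := by
  obtain ⟨b, hbp, hb_zero, hb⟩ := exists_bump (isClosed_closure.isOpen_compl.mem_nhds hp)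
  calc c = T b s := by rw [hT, hbp, mul_one]
    _ ≤ ‖T b‖ := (le_abs_self _).trans (abs_apply_le_norm _ _)
    _ ≤ groupNorm G a t (T b) := norm_le_groupNorm _
    _ = groupNorm G a t b := hN b
    _ ≤ 1 := groupNorm_le_one hG ha hb fun g hg =>
      hb_zero _ fun h => h (subset_closure ⟨g, hg, rfl⟩)

lemma weight_eq_one (hG : G.Nonempty) (ha : IsRapidlyDecreasing a)
    {T : C₀(X, ℝ) ≃L[ℝ] C₀(X, ℝ)} (hN : ∀ x, groupNorm G a t (T x) = groupNorm G a t x)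
    {s p : X} {c : ℝ} (hc : 0 < c) (hT : ∀ f, T f s = c * f p)
    (hs : s ∉ closure {z : X | ∃ φ ∈ G, φ (t 0) = z})
    (hp : p ∉ closure {z : X | ∃ φ ∈ G, φ (t 0) = z}) : c = 1 := by
  have hN_symm : ∀ x, groupNorm G a t (T.symm x) = groupNorm G a t x := fun x => by
    rw [← hN, T.apply_symm_apply]
  have hT_symm : ∀ f, T.symm f p = c⁻¹ * f s := fun f => by
    rw [eq_inv_mul_iff_mul_eq₀ hc.ne', ← hT, T.apply_symm_apply]
  exact (weight_le_one hG ha hN hT hp).antisymm <|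
    (inv_le_one₀ hc).1 (weight_le_one hG ha hN_symm hT_symm hs)

theorem exists_homeomorph_eq_compOp (hG : G.Nonempty) (ha : IsRapidlyDecreasing a)
    (h_nd : IsNowhereDense {z : X | ∃ φ ∈ G, φ (t 0) = z}) {T : C₀(X, ℝ) ≃L[ℝ] C₀(X, ℝ)}
    (hT : ∀ f g, T (c0sup f g) = c0sup (T f) (T g))
    (hN : ∀ x, groupNorm G a t (T x) = groupNorm G a t x) :
    ∃ ψ : X ≃ₜ X, ∀ f, T f = compOp ψ f := by
  obtain ⟨ψ, w, hw, hψ⟩ := exists_homeomorph_apply_eq_mul hT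
  set Z : Set X := closure {z : X | ∃ φ ∈ G, φ (t 0) = z}
  have hZ : Dense Zᶜ := interior_eq_empty_iff_dense_compl.1 h_nd
  have h_dense : Dense (Zᶜ ∩ ψ ⁻¹' Zᶜ) :=
    hZ.inter_of_isOpen_left (hZ.preimage ψ.isOpenMap) isClosed_closure.isOpen_compl
  refine ⟨ψ, fun f => DFunLike.coe_injective <|
    (map_continuous (T f)).ext_on h_dense (map_continuous (compOp ψ f)) ?_⟩
  rintro s ⟨hs, hψs⟩
  rw [hψ, weight_eq_one hG ha hN (hw s) (hψ s) hs hψs, one_mul, compOp_apply]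

end WeightOne

section Staircase

variable {X : Type*} [TopologicalSpace X]

/-- A function with at least the value `(1 / 2) ^ i` at the point `p i` for `i < n`, and at most
`(1 / 2) ^ j` away from the sets `V i` with `i < min j n`. -/
structure IsStaircase (p : ℕ → X) (V : ℕ → Set X) (n : ℕ) (f : C₀(X, ℝ)) : Prop where
  nonneg : ∀ s, 0 ≤ f s
  le_apply : ∀ i < n, (1 / 2) ^ i ≤ f (p i)
  apply_le : ∀ s j, (∀ k < j, k < n → s ∉ V k) → f s ≤ (1 / 2) ^ j

lemma exists_isStaircase [LocallyCompactSpace X] [T2Space X] {p : ℕ → X} {V : ℕ → Set X}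
    (hV : ∀ i, V i ∈ 𝓝 (p i)) (n : ℕ) : ∃ f, IsStaircase p V n f := by
  induction n with
  | zero => exact ⟨0, fun _ => le_rfl, fun i hi => by omega, fun s j _ => by simp⟩
  | succ n ih =>
    obtain ⟨f, hf⟩ := ih
    obtain ⟨b, hbp, hb_zero, hb⟩ := exists_bump (hV n)
    refine ⟨c0sup f ((1 / 2 : ℝ) ^ n • b), fun s => le_max_of_le_left (hf.nonneg s),
      fun i hi => ?_, fun s j hj => ?_⟩
    · rcases Nat.lt_succ_iff_lt_or_eq.1 hi with hi | rfl
      · exact le_max_of_le_left (hf.le_apply i hi)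
      · exact le_max_of_le_right (by simp [hbp])
    · refine max_le (hf.apply_le s j fun k hk hkn => hj k hk (hkn.trans n.lt_succ_self)) ?_
      rw [ZeroAtInftyContinuousMap.smul_apply, smul_eq_mul]
      rcases lt_or_ge n j with hnj | hjn
      · rw [hb_zero s (hj n hnj n.lt_succ_self), mul_zero]
        positivity
      · exact (mul_le_of_le_one_right (by positivity) (hb s).2).trans
          (pow_le_pow_of_le_one (by norm_num) (by norm_num) hjn)

variable {p : ℕ → X} {V : ℕ → Set X} {n : ℕ} {f : C₀(X, ℝ)}

lemma IsStaircase.abs_apply_mem_Icc (hf : IsStaircase p V n f) (s : X) : |f s| ∈ Set.Icc 0 1 := by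
  rw [abs_of_nonneg (hf.nonneg s)]
  exact ⟨hf.nonneg s, by simpa using hf.apply_le s 0 (by simp)⟩

end Staircase

section Recovery

variable {X : Type*} [TopologicalSpace X] {G : Set (X ≃ₜ X)} {a : ℕ → ℝ} {t : ℕ → X}

lemma IsStaircase.mem_of_threshold_lt_weightedSum {p q : ℕ → X} {V : ℕ → Set X} {m : ℕ}
    {f : C₀(X, ℝ)} (hf : IsStaircase p V (m + 1) f) (ha : IsRapidlyDecreasing a)
    (hV : ∀ k, (Set.Iic m ∩ q ⁻¹' V k).Subsingleton) (h : threshold a m < weightedSum a q f) :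
    ∀ i ≤ m, q i ∈ V i := by
  intro i
  induction i using Nat.strong_induction_on with
  | _ i ih =>
    intro him
    by_contra hqi
    have h_notMem : ∀ k ≤ i, ∀ l < k, q k ∉ V l := fun k hki l hlk hqk =>
      hlk.ne <| hV l ⟨Set.mem_Iic.2 (by omega), ih l (by omega) (by omega)⟩
        ⟨Set.mem_Iic.2 (by omega), hqk⟩
    have h_lt : ∀ k < i, |f (q k)| ≤ (1 / 2) ^ k := fun k hk => by
      rw [abs_of_nonneg (hf.nonneg _)]
      exact hf.apply_le _ _ fun l hl _ => h_notMem k hk.le l hl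
    have h_eq : |f (q i)| ≤ (1 / 2) ^ (i + 1) := by
      rw [abs_of_nonneg (hf.nonneg _)]
      refine hf.apply_le _ _ fun l hl _ => ?_
      rcases Nat.lt_succ_iff_lt_or_eq.1 hl with hl | rfl
      exacts [h_notMem i le_rfl l hl, hqi]
    refine h.not_ge ?_
    calc weightedSum a q f ≤ threshold a i :=
          ha.tsum_mul_le_threshold (fun k => hf.abs_apply_mem_Icc (q k)) h_lt h_eq
      _ ≤ threshold a m := threshold_monotone (fun k => (ha.pos k).le) him

lemma IsStaircase.exists_threshold_lt_weightedSum {ψ : X ≃ₜ X} {V : ℕ → Set X} {m : ℕ}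
    {f : C₀(X, ℝ)} (hf : IsStaircase (ψ ∘ t) V (m + 1) f) (ha : IsRapidlyDecreasing a)
    (h_id : Homeomorph.refl X ∈ G) (hm : 1 ≤ m)
    (hN : groupNorm G a t (compOp ψ f) ≤ groupNorm G a t f) :
    ∃ g ∈ G, threshold a m < weightedSum a (g ∘ t) f := by
  have ha_nonneg : ∀ k, 0 ≤ a k := fun k => (ha.pos k).le
  have h_norm : ‖f‖ ≤ threshold a m :=
    (norm_le_of_forall_abs_le zero_le_one fun s => (hf.abs_apply_mem_Icc s).2).trans
      (ha.one_lt_threshold hm).le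
  by_contra! h
  refine lt_irrefl (threshold a m) ?_
  calc threshold a m < ∑ k ∈ Finset.range (m + 1), a k * (1 / 2) ^ k := threshold_lt_sum ha.pos m
    _ ≤ ∑ k ∈ Finset.range (m + 1), a k * |compOp ψ f (t k)| :=
      Finset.sum_le_sum fun k hk => mul_le_mul_of_nonneg_left
        ((hf.le_apply k (Finset.mem_range.1 hk)).trans (le_abs_self _)) (ha_nonneg k)
    _ ≤ weightedSum a t (compOp ψ f) :=
      (summable_mul_abs_apply ha_nonneg ha.summable t _).sum_le_tsum _ fun k _ =>
        mul_nonneg (ha_nonneg k) (abs_nonneg _)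
    _ ≤ groupNorm G a t (compOp ψ f) := weightedSum_le_groupNorm ha_nonneg ha.summable h_id _
    _ ≤ groupNorm G a t f := hN
    _ ≤ threshold a m := groupNorm_le ⟨_, h_id⟩ h_norm h

end Recovery

section RecoveryMetric

variable {X : Type*} [EMetricSpace X] {G : Set (X ≃ₜ X)}

lemma exists_nhds_inter_preimage_subsingleton (hG : Equicontinuous fun g : G => ⇑g.1.symm)
    {ι : Type*} {t : ι → X} (ht : Function.Injective t) {S : Set ι} (hS : S.Finite) (p : X) :
    ∃ W ∈ 𝓝 p, ∀ g ∈ G, (S ∩ (g ∘ t) ⁻¹' W).Subsingleton := by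
  -- `g.symm` maps `W` into a set of diameter less than the spacing of the points `t i`, `i ∈ S`.
  obtain ⟨C, hC, hCS⟩ := (hS.image t).relatively_discrete
  obtain ⟨W, hW, hWC⟩ := equicontinuousAt_iff_pair.1 (hG p) _ (edist_mem_uniformity hC)
  refine ⟨W, hW, fun g hg i hi j hj => by_contra fun hij => ?_⟩
  have h_lt : edist (t i) (t j) < C := by simpa using hWC _ hi.2 _ hj.2 ⟨g, hg⟩
  exact h_lt.not_ge (hCS _ ⟨i, hi.1, rfl⟩ _ ⟨j, hj.1, rfl⟩ (ht.ne hij))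

theorem comp_mem_closure_of_groupNorm_compOp_le [LocallyCompactSpace X] {a : ℕ → ℝ} {t : ℕ → X}
    (hG : Equicontinuous fun g : G => ⇑g.1.symm) (h_id : Homeomorph.refl X ∈ G)
    (ha : IsRapidlyDecreasing a) (ht : Function.Injective t) {ψ : X ≃ₜ X}
    (hN : ∀ f, groupNorm G a t (compOp ψ f) ≤ groupNorm G a t f) :
    ⇑ψ ∘ t ∈ closure ((fun g : X ≃ₜ X => ⇑g ∘ t) '' G) := by
  refine mem_closure_iff_nhds.2 fun U hU => ?_
  rw [nhds_pi, Filter.mem_pi] at hU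
  obtain ⟨I, hI, v, hv, hvU⟩ := hU
  obtain ⟨m, hm, hIm⟩ : ∃ m, 1 ≤ m ∧ ∀ i ∈ I, i ≤ m := by
    obtain ⟨m, hm⟩ := hI.bddAbove
    exact ⟨max 1 m, le_max_left _ _, fun i hi => (hm hi).trans (le_max_right _ _)⟩
  choose W hW hW_sub using fun k =>
    exists_nhds_inter_preimage_subsingleton hG ht (Set.finite_Iic m) (ψ (t k))
  obtain ⟨f, hf⟩ := exists_isStaircase (p := ψ ∘ t) (V := fun k => W k ∩ v k)
    (fun k => inter_mem (hW k) (hv k)) (m + 1)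
  obtain ⟨g, hg, hgf⟩ := hf.exists_threshold_lt_weightedSum ha h_id hm (hN f)
  have hgt : ∀ i ≤ m, g (t i) ∈ W i ∩ v i :=
    hf.mem_of_threshold_lt_weightedSum ha
      (fun k => (hW_sub k g hg).anti fun i hi => ⟨hi.1, hi.2.1⟩) hgf
  exact ⟨g ∘ t, hvU fun i hi => (hgt i (hIm i hi)).2, g, hg, rfl⟩

end RecoveryMetric

section StrongOperatorConvergence

lemma equicontinuous_of_forall_isCompact {ι X Y : Type*} [PseudoMetricSpace X]
    [WeaklyLocallyCompactSpace X] [PseudoMetricSpace Y] {F : ι → X → Y}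
    (h : ∀ K : Set X, IsCompact K → ∀ ε > 0, ∃ δ > 0,
      ∀ x ∈ K, ∀ y ∈ K, dist x y < δ → ∀ i, dist (F i x) (F i y) < ε) : Equicontinuous F := by
  refine fun p => Metric.equicontinuousAt_iff_right.2 fun ε hε => ?_
  obtain ⟨K, hK, hKp⟩ := exists_compact_mem_nhds p
  obtain ⟨δ, hδ, hF⟩ := h K hK ε hε
  filter_upwards [hKp, Metric.ball_mem_nhds p hδ] with x hxK hxp
  exact hF p (mem_of_mem_nhds hKp) x hxK (Metric.mem_ball'.1 hxp)

lemma tendstoUniformlyOn_of_equicontinuous {ι X Y : Type*} [TopologicalSpace X] [UniformSpace Y]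
    {l : Filter ι} {F : ι → X → Y} {f : X → Y} (hF : Equicontinuous F)
    (h : ∀ s, Tendsto (fun i => F i s) l (𝓝 (f s))) {K : Set X} (hK : IsCompact K) :
    TendstoUniformlyOn F f l K := by
  have h_iff := EquicontinuousOn.tendsto_uniformOnFun_iff_pi' (𝔖 := {K}) (by simpa using hK)
    (fun _ _ => hF.equicontinuousOn _) l f
  exact UniformOnFun.tendsto_iff_tendstoUniformlyOn.1
    (h_iff.2 (tendsto_pi_nhds.2 fun s => h s)) K rfl

variable {ι X : Type*} [UniformSpace X] {l : Filter ι} {g : ι → X ≃ₜ X} {ψ : X ≃ₜ X}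

lemma tendsto_symm_apply_of_equicontinuous (hg : Equicontinuous fun i => ⇑(g i).symm)
    (h : ∀ s, Tendsto (fun i => g i s) l (𝓝 (ψ s))) (s : X) :
    Tendsto (fun i => (g i).symm s) l (𝓝 (ψ.symm s)) := by
  refine Uniform.tendsto_nhds_left.2 fun U hU => ?_
  have h_nhds := h (ψ.symm s)
  rw [ψ.apply_symm_apply] at h_nhds
  rw [mem_map]
  filter_upwards [h_nhds (hg s U hU)] with i hi
  simpa using hi i

theorem tendsto_compOp (h : ∀ K, IsCompact K → TendstoUniformlyOn (fun i => ⇑(g i)) ψ l K)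
    (h_symm : ∀ K, IsCompact K → TendstoUniformlyOn (fun i => ⇑(g i).symm) ψ.symm l K)
    (f : C₀(X, ℝ)) : Tendsto (fun i => compOp (g i) f) l (𝓝 (compOp ψ f)) := by
  refine ZeroAtInftyContinuousMap.tendsto_iff_tendstoUniformly.2 <|
    Metric.tendstoUniformly_iff.2 fun η hη => ?_
  have h_infty : ∀ᶠ s in cocompact X, |f s| < η / 2 := by
    simpa using (zero_at_infty f).eventually (Metric.ball_mem_nhds 0 (half_pos hη))
  obtain ⟨K, hK, hfK⟩ := mem_cocompact.1 h_infty
  -- If `g i s ∈ K` while `ψ s ∉ K`, compare `f` and `f ∘ ψ ∘ (g i).symm` at the point `g i s`.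
  have h_near := (ZeroAtInftyContinuousMap.uniformContinuous f).comp_tendstoUniformlyOn
    (h (ψ ⁻¹' K) (ψ.isCompact_preimage.2 hK))
  have h_near_symm := (ZeroAtInftyContinuousMap.uniformContinuous
    (compOp ψ f)).comp_tendstoUniformlyOn (h_symm K hK)
  filter_upwards [Metric.tendstoUniformlyOn_iff.1 h_near η hη,
    Metric.tendstoUniformlyOn_iff.1 h_near_symm η hη] with i hi hi_symm s
  by_cases hψs : ψ s ∈ K
  · exact hi s hψs
  by_cases hgs : g i s ∈ K
  · simpa [dist_comm] using hi_symm (g i s) hgs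
  · have hfψ : |f (ψ s)| < η / 2 := hfK hψs
    have hfg : |f (g i s)| < η / 2 := hfK hgs
    calc dist (f (ψ s)) (f (g i s)) ≤ |f (ψ s)| + |f (g i s)| := abs_sub _ _
      _ < η := by linarith

theorem tendsto_compOp_of_equicontinuous {D : Set X} (hD : Dense D)
    (hg : Equicontinuous fun i => ⇑(g i)) (hg_symm : Equicontinuous fun i => ⇑(g i).symm)
    (h : ∀ s ∈ D, Tendsto (fun i => g i s) l (𝓝 (ψ s))) (f : C₀(X, ℝ)) :
    Tendsto (fun i => compOp (g i) f) l (𝓝 (compOp ψ f)) := by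
  have h_all : ∀ s, Tendsto (fun i => g i s) l (𝓝 (ψ s)) := fun s =>
    (hg s).tendsto_of_mem_closure ψ.continuous.continuousWithinAt h (hD s)
  exact tendsto_compOp (fun K => tendstoUniformlyOn_of_equicontinuous hg h_all)
    (fun K => tendstoUniformlyOn_of_equicontinuous hg_symm
      (tendsto_symm_apply_of_equicontinuous hg_symm h_all)) f

end StrongOperatorConvergence

section DenseSequence

variable {X : Type*} [TopologicalSpace X] [T1Space X]

lemma infinite_of_isNowhereDense {S : Set X} (h : IsNowhereDense S) (hS : S.Nonempty) :
    Infinite X := by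
  by_contra h_fin
  rw [not_infinite_iff_finite] at h_fin
  rw [IsNowhereDense, (isOpen_discrete _).interior_eq] at h
  exact hS.ne_empty (Set.subset_eq_empty subset_closure h)

lemma exists_injective_denseRange [Infinite X] [TopologicalSpace.SeparableSpace X] (p : X) :
    ∃ t : ℕ → X, t 0 = p ∧ Function.Injective t ∧ DenseRange t := by
  obtain ⟨D, hD_countable, hD⟩ := TopologicalSpace.exists_countable_dense X
  have h_dense : Dense (insert p D) := hD.mono (Set.subset_insert p D)
  have h_infinite : (insert p D).Infinite := fun h_fin =>
    Set.infinite_univ (h_dense.closure_eq ▸ h_fin.isClosed.closure_eq ▸ h_fin)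
  have := (hD_countable.insert p).to_subtype
  have := h_infinite.to_subtype
  obtain ⟨e⟩ := nonempty_equiv_of_countable (α := ℕ) (β := ↥(insert p D))
  let e' := (Equiv.swap 0 (e.symm ⟨p, Set.mem_insert p D⟩)).trans e
  exact ⟨Subtype.val ∘ e', by simp [e'], Subtype.val_injective.comp e'.injective,
    h_dense.denseRange_val.comp e'.surjective.denseRange continuous_subtype_val⟩

end DenseSequence

section StrongOperatorClosure

theorem exists_seq_tendsto_compOp_of_groupNorm_compOp_le {X : Type*} [EMetricSpace X]
    [LocallyCompactSpace X] {G : Set (X ≃ₜ X)} {a : ℕ → ℝ} {t : ℕ → X}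
    (hG : Equicontinuous fun g : G => ⇑g.1) (hG_symm : Equicontinuous fun g : G => ⇑g.1.symm)
    (h_id : Homeomorph.refl X ∈ G) (ha : IsRapidlyDecreasing a) (ht : Function.Injective t)
    (ht_dense : DenseRange t) {ψ : X ≃ₜ X}
    (hN : ∀ f, groupNorm G a t (compOp ψ f) ≤ groupNorm G a t f) :
    ∃ g : ℕ → X ≃ₜ X, (∀ n, g n ∈ G) ∧
      ∀ f, Tendsto (fun n => compOp (g n) f) atTop (𝓝 (compOp ψ f)) := by
  obtain ⟨u, hu, hu_lim⟩ := mem_closure_iff_seq_limit.1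
    (comp_mem_closure_of_groupNorm_compOp_le hG_symm h_id ha ht hN)
  choose g hgG hgu using hu
  obtain rfl : (fun n => ⇑(g n) ∘ t) = u := funext hgu
  exact ⟨g, hgG, tendsto_compOp_of_equicontinuous ht_dense (hG.comp fun n => ⟨g n, hgG n⟩)
    (hG_symm.comp fun n => ⟨g n, hgG n⟩) (Set.forall_mem_range.2 (tendsto_pi_nhds.1 hu_lim))⟩

end StrongOperatorClosure

theorem stmt7_general {X : Type*} [MetricSpace X] [TopologicalSpace.SeparableSpace X]
    [LocallyCompactSpace X]
    (G : Set (X ≃ₜ X)) (h_id : Homeomorph.refl X ∈ G)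
    (h_comp : ∀ φ ∈ G, ∀ ψ ∈ G, φ.trans ψ ∈ G) (h_inv : ∀ φ ∈ G, φ.symm ∈ G)
    (h_equi : ∀ K : Set X, IsCompact K → ∀ ε > 0, ∃ δ > 0,
      ∀ x ∈ K, ∀ y ∈ K, dist x y < δ → ∀ φ ∈ G, dist (φ x) (φ y) < ε)
    (h_nd : Nonempty X → ∃ t : X, IsNowhereDense {z : X | ∃ φ ∈ G, φ t = z})
    (h_closed : ∀ φn : ℕ → X ≃ₜ X, (∀ n, φn n ∈ G) →
      ∀ T : C₀(X, ℝ) ≃ₗᵢ[ℝ] C₀(X, ℝ),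
        (∀ f g : C₀(X, ℝ), T (c0sup f g) = c0sup (T f) (T g)) →
        (∀ f : C₀(X, ℝ), Tendsto (fun n => ‖compOp (φn n) f - T f‖) atTop (𝓝 0)) →
        ∃ φ ∈ G, ∀ f : C₀(X, ℝ), T f = compOp φ f) :
    ∀ C : ℝ, 1 < C → ∃ N : C₀(X, ℝ) → ℝ,
      (∀ x y : C₀(X, ℝ), N (x + y) ≤ N x + N y) ∧
      (∀ (c : ℝ) (x : C₀(X, ℝ)), N (c • x) = |c| * N x) ∧
      (∀ x y : C₀(X, ℝ), (∀ t, |x t| ≤ |y t|) → N x ≤ N y) ∧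
      (∀ x : C₀(X, ℝ), ‖x‖ ≤ N x ∧ N x ≤ C * ‖x‖) ∧
      (∀ φ ∈ G, ∀ x : C₀(X, ℝ), N (compOp φ x) = N x) ∧
      (∀ T : C₀(X, ℝ) ≃L[ℝ] C₀(X, ℝ),
        (∀ f g : C₀(X, ℝ), T (c0sup f g) = c0sup (T f) (T g)) →
        (∀ x : C₀(X, ℝ), N (T x) = N x) →
        ∃ φ ∈ G, ∀ f : C₀(X, ℝ), T f = compOp φ f) := by
  intro C hC
  rcases isEmpty_or_nonempty X with hX | hX
  · have h_eq : ∀ f g : C₀(X, ℝ), f = g := ZeroAtInftyContinuousMap.eq_of_empty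
    exact ⟨norm, norm_add_le, norm_smul, fun _ _ => norm_le_norm_of_abs_le,
      fun x => ⟨le_rfl, le_mul_of_one_le_left (norm_nonneg x) hC.le⟩, fun φ _ => norm_compOp φ,
      fun _ _ _ => ⟨_, h_id, fun _ => h_eq _ _⟩⟩
  obtain ⟨t₀, ht₀⟩ := h_nd hX
  have := infinite_of_isNowhereDense ht₀ ⟨t₀, _, h_id, rfl⟩
  obtain ⟨t, rfl, ht, ht_dense⟩ := exists_injective_denseRange t₀
  obtain ⟨a, ha, haC⟩ := exists_isRapidlyDecreasing hC
  have ha_nonneg : ∀ k, 0 ≤ a k := fun k => (ha.pos k).le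
  have hG : Equicontinuous fun g : G => ⇑g.1 := equicontinuous_of_forall_isCompact
    fun K hK ε hε => by simpa only [Subtype.forall] using h_equi K hK ε hε
  have hG_symm : Equicontinuous fun g : G => ⇑g.1.symm :=
    hG.comp fun g : G => ⟨g.1.symm, h_inv _ g.2⟩
  refine ⟨groupNorm G a t, groupNorm_add_le ⟨_, h_id⟩ ha_nonneg ha.summable, groupNorm_smul,
    fun _ _ => groupNorm_mono ⟨_, h_id⟩ ha_nonneg ha.summable,
    fun x => ⟨norm_le_groupNorm x,
      groupNorm_le_mul_norm ⟨_, h_id⟩ ha_nonneg ha.summable hC.le haC x⟩,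
    fun φ => groupNorm_compOp ha_nonneg ha.summable h_comp h_inv, fun T hT hN => ?_⟩
  obtain ⟨ψ, hψ⟩ := exists_homeomorph_eq_compOp ⟨_, h_id⟩ ha ht₀ hT hN
  obtain ⟨g, hg, h_lim⟩ := exists_seq_tendsto_compOp_of_groupNorm_compOp_le hG hG_symm h_id ha ht
    ht_dense fun f => (hψ f ▸ hN f).le
  refine h_closed g hg ⟨T.toLinearEquiv, fun f => ?_⟩ hT fun f => ?_
  · exact (congrArg norm (hψ f)).trans (norm_compOp ψ f)
  · exact tendsto_iff_norm_sub_tendsto_zero.1 ((hψ f).symm ▸ h_lim f)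

/-- **Theorem 1.2 (main theorem).** Let `X` be a locally compact Polish space and `G` a
group of homeomorphisms of `X`, equicontinuous on compact sets, with nowhere dense orbits,
and relatively SOT-closed (any SOT limit of composition operators from `G` which is a
surjective lattice isometry of `(C₀(X), ‖·‖_∞)` is again a composition operator from `G`).
Then for every `C > 1` there is an equivalent lattice norm `N` on `C₀(X)`, with
`‖·‖ ≤ N ≤ C‖·‖`, invariant under `G`, whose lattice isometries are exactly the
composition operators coming from `G`. -/
theorem stmt7 {X : Type*} [MetricSpace X] [PolishSpace X] [LocallyCompactSpace X]
    (G : Set (X ≃ₜ X)) (h_id : Homeomorph.refl X ∈ G)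
    (h_comp : ∀ φ ∈ G, ∀ ψ ∈ G, φ.trans ψ ∈ G) (h_inv : ∀ φ ∈ G, φ.symm ∈ G)
    (h_equi : ∀ K : Set X, IsCompact K → ∀ ε > 0, ∃ δ > 0,
      ∀ x ∈ K, ∀ y ∈ K, dist x y < δ → ∀ φ ∈ G, dist (φ x) (φ y) < ε)
    (h_nd : ∀ t : X, IsNowhereDense {z : X | ∃ φ ∈ G, φ t = z})
    (h_closed : ∀ φn : ℕ → X ≃ₜ X, (∀ n, φn n ∈ G) →
      ∀ T : C₀(X, ℝ) ≃ₗᵢ[ℝ] C₀(X, ℝ),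
        (∀ f g : C₀(X, ℝ), T (c0sup f g) = c0sup (T f) (T g)) →
        (∀ f : C₀(X, ℝ), Tendsto (fun n => ‖compOp (φn n) f - T f‖) atTop (𝓝 0)) →
        ∃ φ ∈ G, ∀ f : C₀(X, ℝ), T f = compOp φ f) :
    ∀ C : ℝ, 1 < C → ∃ N : C₀(X, ℝ) → ℝ,
      (∀ x y : C₀(X, ℝ), N (x + y) ≤ N x + N y) ∧
      (∀ (c : ℝ) (x : C₀(X, ℝ)), N (c • x) = |c| * N x) ∧
      (∀ x y : C₀(X, ℝ), (∀ t, |x t| ≤ |y t|) → N x ≤ N y) ∧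
      (∀ x : C₀(X, ℝ), ‖x‖ ≤ N x ∧ N x ≤ C * ‖x‖) ∧
      (∀ φ ∈ G, ∀ x : C₀(X, ℝ), N (compOp φ x) = N x) ∧
      (∀ T : C₀(X, ℝ) ≃L[ℝ] C₀(X, ℝ),
        (∀ f g : C₀(X, ℝ), T (c0sup f g) = c0sup (T f) (T g)) →
        (∀ x : C₀(X, ℝ), N (T x) = N x) →
        ∃ φ ∈ G, ∀ f : C₀(X, ℝ), T f = compOp φ f) :=
  stmt7_general G h_id h_comp h_inv h_equi (fun ⟨t⟩ => ⟨t, h_nd t⟩) h_closed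

end
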